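/- Fix k ≥ 1 and 0 < Δ < Δ_k, and for each n ≥ k let m = ⌈Δ n⌉. Then the minimax testing risk inf_ψ max( P_unif(ψ = 1), P_planted(ψ = 0) ), where the infimum runs over all functions ψ from m-tuples of k-flats of F_2^n to {0,1}, tends to 1/2 as n → ∞. -/

import Mathlib

open scoped BigOperators Classical
open Filter Topology

abbrev F2n (n : ℕ) := Fin n → ZMod 2

def IsFlat (n k : ℕ) (W : Set (F2n n)) : Prop :=
  ∃ A : AffineSubspace (ZMod 2) (F2n n),
    (A : Set (F2n n)) = W ∧ W.Nonempty ∧ Module.finrank (ZMod 2) A.direction = n - k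

def Flat (n k : ℕ) : Type := {W : Set (F2n n) // IsFlat n k W}

noncomputable instance (n k : ℕ) : Fintype (Flat n k) := by
  unfold Flat; exact Fintype.ofFinite _

noncomputable def q0 (n k : ℕ) : Flat n k → ℝ :=
  fun _ => (Fintype.card (Flat n k) : ℝ)⁻¹

noncomputable def qx (n k : ℕ) (x : F2n n) : Flat n k → ℝ :=
  fun W => if x ∈ W.1 then 0 else (Nat.card {W : Flat n k // x ∉ W.1} : ℝ)⁻¹

noncomputable def prob {α : Type*} [Fintype α] (p : α → ℝ) (E : Set α) : ℝ :=
  ∑ a, if a ∈ E then p a else 0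

noncomputable def expect {α : Type*} [Fintype α] (p : α → ℝ) (f : α → ℝ) : ℝ :=
  ∑ a, p a * f a

noncomputable def Punif (n k m : ℕ) : (Fin m → Flat n k) → ℝ :=
  fun V => ∏ j, q0 n k (V j)

noncomputable def Pplanted (n k m : ℕ) : (Fin m → Flat n k) → ℝ :=
  fun V => ((2:ℝ)^n)⁻¹ * ∑ x : F2n n, ∏ j, qx n k x (V j)

noncomputable def Z (n k m : ℕ) (V : Fin m → Flat n k) : ℕ :=
  Nat.card {x : F2n n // ∀ j, x ∉ (V j).1}

noncomputable def satCount (n k m : ℕ) (V : Fin m → Flat n k) (x : F2n n) : ℕ :=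
  Nat.card {j : Fin m // x ∉ (V j).1}

noncomputable def maxSat (n k m : ℕ) (V : Fin m → Flat n k) : ℕ :=
  Finset.univ.sup (fun x : F2n n => satCount n k m V x)

noncomputable def qxpi (n k : ℕ) (x : F2n n) (π : ℝ) : Flat n k → ℝ :=
  fun W => (1 - π) * q0 n k W + π * qx n k x W

noncomputable def Pplantedpi (n k m : ℕ) (π : ℝ) : (Fin m → Flat n k) → ℝ :=
  fun V => ((2:ℝ)^n)⁻¹ * ∑ x : F2n n, ∏ j, qxpi n k x π (V j)

noncomputable def DeltaK (k : ℕ) : ℝ :=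
  Real.log (1/2) / Real.log (1 - ((2:ℝ)^k)⁻¹)

lemma flat_card (n k : ℕ) (W : Flat n k) :
    (∑ x : F2n n, if x ∈ W.1 then (1:ℝ) else 0) = 2 ^ (n - k) := by
  obtain ⟨W, A, rfl, ⟨p, hp⟩, hd⟩ := W
  have h1 : Fintype.card A.direction = 2 ^ (n - k) := by
    rw [Module.card_eq_pow_finrank (K := ZMod 2), hd, ZMod.card]
  rw [Finset.sum_boole]
  have h2 : (Finset.univ.filter fun x : F2n n => x ∈ (A : Set (F2n n))).card
      = Fintype.card A.direction := by
    symm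
    rw [← Fintype.card_coe]
    refine Fintype.card_congr ⟨fun v => ⟨v.1 + p, ?_⟩, fun x => ⟨x.1 - p, ?_⟩, ?_, ?_⟩
    · simp only [Finset.mem_filter, Finset.mem_univ, true_and]
      exact AffineSubspace.vadd_mem_of_mem_direction v.2 hp
    · have := x.2
      simp only [Finset.mem_filter, Finset.mem_univ, true_and] at this
      exact AffineSubspace.vsub_mem_direction this hp
    · intro v; simp
    · intro v; simp
  rw [h2, h1]; simp

lemma flat_nonempty (n k : ℕ) : Nonempty (Flat n k) := by
  let f : Fin (n - k) → F2n n := fun i => Pi.basisFun (ZMod 2) (Fin n) (Fin.castLE (Nat.sub_le n k) i)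
  have hf : LinearIndependent (ZMod 2) f :=
    (Pi.basisFun (ZMod 2) (Fin n)).linearIndependent.comp _ (Fin.castLE_injective _)
  refine ⟨⟨_, (Submodule.span (ZMod 2) (Set.range f)).toAffineSubspace, rfl, ⟨0, ?_⟩, ?_⟩⟩
  · exact Submodule.zero_mem _
  · rw [Submodule.toAffineSubspace_direction, finrank_span_eq_card hf, Fintype.card_fin]

lemma isFlat_image {n k : ℕ} (e : F2n n ≃ᵃ[ZMod 2] F2n n) {W : Set (F2n n)} (h : IsFlat n k W) :
    IsFlat n k (Set.image e W) := by
  obtain ⟨A, rfl, hne, hd⟩ := h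
  refine ⟨A.map (e : F2n n →ᵃ[ZMod 2] F2n n), by simp, hne.image _, ?_⟩
  rw [AffineSubspace.map_direction, ← hd]
  exact LinearEquiv.finrank_map_eq e.linear _

def flatEquiv {n k : ℕ} (e : F2n n ≃ᵃ[ZMod 2] F2n n) : Flat n k ≃ Flat n k where
  toFun W := ⟨Set.image e W.1, isFlat_image e W.2⟩
  invFun W := ⟨Set.image e.symm W.1, isFlat_image e.symm W.2⟩
  left_inv W := Subtype.ext (by simp [Set.image_image])
  right_inv W := Subtype.ext (by
    change Set.image e (Set.image e.symm W.1) = W.1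
    rw [Set.image_image]; simp)

lemma mem_flatEquiv {n k : ℕ} (e : F2n n ≃ᵃ[ZMod 2] F2n n) (W : Flat n k) (x : F2n n) :
    e x ∈ (flatEquiv e W).1 ↔ x ∈ W.1 := by
  change e x ∈ Set.image e W.1 ↔ x ∈ W.1
  exact e.injective.mem_set_image

noncomputable def ind {n k : ℕ} (W : Flat n k) (x : F2n n) : ℝ := if x ∈ W.1 then 1 else 0

lemma ind_flatEquiv {n k : ℕ} (e : F2n n ≃ᵃ[ZMod 2] F2n n) (W : Flat n k) (x : F2n n) :
    ind (flatEquiv e W) (e x) = ind W x := by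
  simp only [ind, mem_flatEquiv]

lemma sum_ind_equiv {n k : ℕ} (e : F2n n ≃ᵃ[ZMod 2] F2n n) (x y : F2n n) :
    ∑ W : Flat n k, ind W (e x) * ind W (e y) = ∑ W : Flat n k, ind W x * ind W y := by
  rw [← Equiv.sum_comp (flatEquiv e)]
  simp only [ind_flatEquiv]

lemma ind_sq {n k : ℕ} (W : Flat n k) (x : F2n n) : ind W x * ind W x = ind W x := by
  simp [ind]

lemma exists_linear {n : ℕ} {v w : F2n n} (hv : v ≠ 0) (hw : w ≠ 0) :
    ∃ g : F2n n ≃ₗ[ZMod 2] F2n n, g v = w := by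
  obtain ⟨g, hg⟩ := Submodule.exists_linearEquiv_restrict_eq
    ((LinearEquiv.toSpanNonzeroSingleton (ZMod 2) (F2n n) v hv).symm.trans
      (LinearEquiv.toSpanNonzeroSingleton (ZMod 2) (F2n n) w hw))
  refine ⟨g, ?_⟩
  have := hg (LinearEquiv.toSpanNonzeroSingleton (ZMod 2) (F2n n) v hv 1)
  simp only [LinearEquiv.trans_apply, LinearEquiv.symm_apply_apply] at this
  simpa using this.symm

lemma exists_affine {n : ℕ} {x y z : F2n n} (hy : y ≠ x) (hz : z ≠ x) :
    ∃ e : F2n n ≃ᵃ[ZMod 2] F2n n, e x = x ∧ e y = z := by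
  obtain ⟨g, hg⟩ := exists_linear (sub_ne_zero.2 hy) (sub_ne_zero.2 hz)
  refine ⟨(AffineEquiv.constVAdd (ZMod 2) (F2n n) (-x)).trans
    (g.toAffineEquiv.trans (AffineEquiv.constVAdd (ZMod 2) (F2n n) x)), ?_, ?_⟩
  · simp
  · simp only [AffineEquiv.trans_apply, AffineEquiv.constVAdd_apply, vadd_eq_add,
      LinearEquiv.coe_toAffineEquiv]
    rw [neg_add_eq_sub, hg]; abel

lemma c1_const {n k : ℕ} (x y : F2n n) :
    ∑ W : Flat n k, ind W x = ∑ W : Flat n k, ind W y := by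
  have := sum_ind_equiv (k := k) (AffineEquiv.constVAdd (ZMod 2) (F2n n) (x - y)) y y
  simpa [ind_sq] using this

lemma c1_eq {n k : ℕ} (hkn : k ≤ n) (x : F2n n) :
    ∑ W : Flat n k, ind W x = (Fintype.card (Flat n k) : ℝ) * ((2:ℝ) ^ k)⁻¹ := by
  have h : ∑ y : F2n n, ∑ W : Flat n k, ind W y = (Fintype.card (Flat n k) : ℝ) * 2 ^ (n - k) := by
    rw [Finset.sum_comm]
    simp only [ind, flat_card]
    simp
  simp only [fun y => c1_const (k := k) y x] at h
  simp only [Finset.sum_const, Finset.card_univ, Fintype.card_fun, ZMod.card, Fintype.card_fin,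
    nsmul_eq_mul] at h
  push_cast at h
  have e : (2:ℝ) ^ n = 2 ^ (n - k) * 2 ^ k := by rw [← pow_add]; congr 1; omega
  rw [e] at h
  have : (2:ℝ) ^ (n - k) ≠ 0 := by positivity
  field_simp
  apply mul_left_cancel₀ this
  linarith

lemma c2_le {n k : ℕ} (hkn : k ≤ n) {x y : F2n n} (hxy : y ≠ x) :
    ∑ W : Flat n k, ind W x * ind W y ≤
      (Fintype.card (Flat n k) : ℝ) * ((2:ℝ) ^ k)⁻¹ * ((2:ℝ) ^ k)⁻¹ := by
  set c := ∑ W : Flat n k, ind W x * ind W y with hc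
  have hN := c1_eq (k := k) hkn x
  set N := (Fintype.card (Flat n k) : ℝ)
  have h : ∑ z : F2n n, ∑ W : Flat n k, ind W x * ind W z
      = N * ((2:ℝ) ^ k)⁻¹ * 2 ^ (n - k) := by
    rw [Finset.sum_comm]
    simp only [← Finset.mul_sum]
    have : ∀ W : Flat n k, ∑ z, ind W z = (2:ℝ) ^ (n - k) := fun W => by
      simp only [ind, flat_card]
    simp only [this, ← Finset.sum_mul, hN]
  rw [← Finset.add_sum_erase _ _ (Finset.mem_univ x)] at h
  simp only [ind_sq, hN] at h
  have h3 : ∑ z ∈ Finset.univ.erase x, ∑ W : Flat n k, ind W x * ind W z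
      = ((2:ℝ) ^ n - 1) * c := by
    rw [Finset.sum_congr rfl (g := fun _ => c)]
    · rw [Finset.sum_const, Finset.card_erase_of_mem (Finset.mem_univ _)]
      simp only [Finset.card_univ, Fintype.card_fun, ZMod.card, Fintype.card_fin, nsmul_eq_mul]
      rw [Nat.cast_sub Nat.one_le_two_pow]
      push_cast; rfl
    · intro z hz
      obtain ⟨e, h1, h2⟩ := exists_affine hxy (Finset.ne_of_mem_erase hz)
      have := sum_ind_equiv (k := k) e x y
      rw [h1, h2] at this
      exact this
  rw [h3] at h
  have e : (2:ℝ) ^ n = 2 ^ (n - k) * 2 ^ k := by rw [← pow_add]; congr 1; omega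
  have hn : 1 ≤ n := by
    rcases Nat.eq_zero_or_pos n with h0 | h0
    · subst h0; exact absurd (Subsingleton.elim y x) hxy
    · exact h0
  have h2n : (1:ℝ) < 2 ^ n := one_lt_pow₀ (by norm_num) (by omega)
  have h2k : (1:ℝ) ≤ 2 ^ k := one_le_pow₀ (by norm_num)
  have hN0 : 0 ≤ N := Nat.cast_nonneg _
  have hp : (0:ℝ) < 2 ^ k := by positivity
  refine le_of_mul_le_mul_left ?_ (sub_pos.2 h2n)
  have h4 : ((2:ℝ) ^ n - 1) * c = N * ((2:ℝ) ^ k)⁻¹ * (2 ^ (n - k) - 1) := by linarith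
  rw [h4, e]
  have h5 : (2:ℝ) ^ (n - k) - 1 ≤ (2 ^ (n - k) * 2 ^ k - 1) * ((2:ℝ) ^ k)⁻¹ := by
    rw [← div_eq_mul_inv, le_div_iff₀ hp]; linarith
  calc _ ≤ N * ((2:ℝ) ^ k)⁻¹ * ((2 ^ (n - k) * 2 ^ k - 1) * ((2:ℝ) ^ k)⁻¹) :=
        mul_le_mul_of_nonneg_left h5 (by positivity)
    _ = _ := by ring

lemma qx_eq {n k : ℕ} (hkn : k ≤ n) (x : F2n n) (W : Flat n k) :
    qx n k x W = (1 - ind W x) * ((Fintype.card (Flat n k) : ℝ) * (1 - ((2:ℝ) ^ k)⁻¹))⁻¹ := by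
  have h : (Nat.card {W : Flat n k // x ∉ W.1} : ℝ)
      = (Fintype.card (Flat n k) : ℝ) * (1 - ((2:ℝ) ^ k)⁻¹) := by
    rw [mul_sub, ← c1_eq hkn x, Nat.card_eq_fintype_card, Fintype.card_subtype]
    have : ∀ W : Flat n k, ind W x = 1 - (if x ∉ W.1 then (1:ℝ) else 0) := by
      intro W; by_cases h : x ∈ W.1 <;> simp [ind, h]
    simp only [this]
    rw [Finset.sum_sub_distrib, Finset.sum_boole]
    simp
  unfold qx
  rw [h]
  by_cases hx : x ∈ W.1 <;> simp [ind, hx]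

lemma card_flat_pos (n k : ℕ) : (0:ℝ) < Fintype.card (Flat n k) := by
  have := flat_nonempty n k
  exact_mod_cast Fintype.card_pos

lemma p_pos {k : ℕ} (hk : 1 ≤ k) : (0:ℝ) < 1 - ((2:ℝ) ^ k)⁻¹ := by
  have : (1:ℝ) < 2 ^ k := one_lt_pow₀ (by norm_num) (by omega)
  exact sub_pos.2 (inv_lt_one_of_one_lt₀ this)

lemma sum_qx {n k : ℕ} (hk : 1 ≤ k) (hkn : k ≤ n) (x : F2n n) : ∑ W, qx n k x W = 1 := by
  simp only [qx_eq hkn, ← Finset.sum_mul, Finset.sum_sub_distrib, c1_eq hkn]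
  have := p_pos hk
  have := card_flat_pos n k
  simp only [Finset.sum_const, Finset.card_univ, nsmul_eq_mul]
  rw [← mul_sub]
  exact mul_inv_cancel₀ (by positivity)

lemma sum_qx_self {n k : ℕ} (hk : 1 ≤ k) (hkn : k ≤ n) (x : F2n n) :
    (Fintype.card (Flat n k) : ℝ) * ∑ W, qx n k x W * qx n k x W = (1 - ((2:ℝ) ^ k)⁻¹)⁻¹ := by
  have : ∀ W, qx n k x W * qx n k x W =
      qx n k x W * ((Fintype.card (Flat n k) : ℝ) * (1 - ((2:ℝ) ^ k)⁻¹))⁻¹ := by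
    intro W
    rw [qx_eq hkn]
    by_cases hx : x ∈ W.1 <;> simp [ind, hx]
  simp only [this, ← Finset.sum_mul, sum_qx hk hkn]
  have := p_pos hk
  have := card_flat_pos n k
  rw [one_mul, mul_inv, ← mul_assoc, mul_inv_cancel₀ this.ne', one_mul]

lemma sum_qx_ne {n k : ℕ} (hk : 1 ≤ k) (hkn : k ≤ n) {x y : F2n n} (hxy : y ≠ x) :
    (Fintype.card (Flat n k) : ℝ) * ∑ W, qx n k x W * qx n k y W ≤ 1 := by
  have h2 := c2_le (k := k) hkn hxy
  have hx := c1_eq (k := k) hkn x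
  have hy := c1_eq (k := k) hkn y
  have hp := p_pos hk
  have hN := card_flat_pos n k
  set N := (Fintype.card (Flat n k) : ℝ) with hNdef
  set p := ((2:ℝ) ^ k)⁻¹
  have h : ∑ W : Flat n k, (1 - ind W x) * (1 - ind W y) ≤ N * (1 - p) ^ 2 := by
    have : ∀ W : Flat n k, (1 - ind W x) * (1 - ind W y)
        = 1 - ind W x - ind W y + ind W x * ind W y := fun W => by ring
    simp only [this, Finset.sum_add_distrib, Finset.sum_sub_distrib, hx, hy]
    simp only [Finset.sum_const, Finset.card_univ, nsmul_eq_mul, mul_one]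
    rw [← hNdef]
    nlinarith
  have h_eq : ∑ W, qx n k x W * qx n k y W
      = (∑ W : Flat n k, (1 - ind W x) * (1 - ind W y)) * (N * (1 - p))⁻¹ ^ 2 := by
    rw [Finset.sum_mul]
    refine Finset.sum_congr rfl fun W _ => ?_
    rw [qx_eq hkn, qx_eq hkn]; ring
  rw [h_eq]
  calc _ ≤ N * (N * (1 - p) ^ 2 * (N * (1 - p))⁻¹ ^ 2) := by gcongr
    _ = 1 := by field_simp

lemma sum_tuple {n k m : ℕ} (f : Flat n k → ℝ) :
    ∑ V : Fin m → Flat n k, ∏ j, f (V j) = (∑ W, f W) ^ m := by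
  rw [Finset.sum_pow', Fintype.piFinset_univ]

lemma sum_planted {n k m : ℕ} (hk : 1 ≤ k) (hkn : k ≤ n) : ∑ V, Pplanted n k m V = 1 := by
  unfold Pplanted
  rw [← Finset.mul_sum, Finset.sum_comm]
  simp only [sum_tuple, sum_qx hk hkn]
  simp

lemma chi_bound {n k m : ℕ} (hk : 1 ≤ k) (hkn : k ≤ n) :
    (Fintype.card (Flat n k) : ℝ) ^ m * ∑ V, Pplanted n k m V ^ 2 ≤
      1 + ((2:ℝ) ^ n)⁻¹ * ((1 - ((2:ℝ) ^ k)⁻¹)⁻¹) ^ m := by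
  set N := (Fintype.card (Flat n k) : ℝ) with hN
  have e : N ^ m * ∑ V, Pplanted n k m V ^ 2 = ((2:ℝ) ^ n)⁻¹ ^ 2 *
      ∑ x : F2n n, ∑ y : F2n n, (N * ∑ W, qx n k x W * qx n k y W) ^ m := by
    simp only [mul_pow, ← Finset.mul_sum, ← sum_tuple]
    rw [mul_left_comm]
    congr 1
    unfold Pplanted
    simp only [mul_pow, ← Finset.mul_sum]
    congr 1
    simp only [sq, Finset.sum_mul_sum, ← Finset.prod_mul_distrib]
    rw [Finset.sum_comm]
    refine Finset.sum_congr rfl fun x _ => ?_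
    rw [Finset.sum_comm]
  have hN0 := card_flat_pos n k
  have hq : ∀ x (W : Flat n k), 0 ≤ qx n k x W := by
    intro x W; unfold qx; split_ifs <;> positivity
  set r := ((1 - ((2:ℝ) ^ k)⁻¹)⁻¹) ^ m with hr
  have hr0 : 0 ≤ r := pow_nonneg (inv_nonneg.2 (p_pos hk).le) _
  have b : ∀ x y : F2n n, (N * ∑ W, qx n k x W * qx n k y W) ^ m ≤ 1 + if x = y then r else 0 := by
    intro x y
    by_cases h : x = y
    · subst h
      rw [sum_qx_self hk hkn]; simp [hr]
    · simp only [h, if_false, add_zero]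
      refine pow_le_one₀ ?_ (sum_qx_ne hk hkn (Ne.symm h))
      exact mul_nonneg hN0.le (Finset.sum_nonneg fun W _ => mul_nonneg (hq _ _) (hq _ _))
  rw [e]
  calc _ ≤ ((2:ℝ) ^ n)⁻¹ ^ 2 * ∑ x : F2n n, ∑ y : F2n n, (1 + if x = y then r else 0) := by
        gcongr with x _ y _
        exact b x y
    _ = _ := by
        simp only [Finset.sum_add_distrib, Finset.sum_ite_eq, Finset.mem_univ, if_true]
        simp only [Finset.sum_const, Finset.card_univ, Fintype.card_fun, ZMod.card,
          Fintype.card_fin, nsmul_eq_mul]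
        push_cast
        field_simp

lemma punif_eq {n k m : ℕ} (V : Fin m → Flat n k) :
    Punif n k m V = ((Fintype.card (Fin m → Flat n k) : ℕ) : ℝ)⁻¹ := by
  simp [Punif, q0]

/-- From a second moment bound to the risk. -/
lemma risk_abs {α : Type*} [Fintype α] [Nonempty α] (p r : α → ℝ) (ε : ℝ)
    (hp : ∀ a, p a = (Fintype.card α : ℝ)⁻¹) (hr : ∑ a, r a = 1)
    (h : (Fintype.card α : ℝ) * ∑ a, r a ^ 2 ≤ 1 + ε) :
    |(⨅ ψ : α → Bool, max (prob p {a | ψ a = true}) (prob r {a | ψ a = false})) - 1/2|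
      ≤ √ε + (Fintype.card α : ℝ)⁻¹ := by
  set M := (Fintype.card α : ℝ) with hM
  have hM0 : 0 < M := by rw [hM]; exact_mod_cast Fintype.card_pos
  have hps : ∑ a, p a = 1 := by
    simp only [hp, Finset.sum_const, Finset.card_univ, nsmul_eq_mul]
    exact mul_inv_cancel₀ hM0.ne'
  have hD : M * ∑ a, (r a - p a) ^ 2 ≤ ε := by
    have : ∀ a, (r a - p a) ^ 2 = r a ^ 2 - 2 * M⁻¹ * r a + M⁻¹ * p a := by
      intro a; rw [hp]; ring
    simp only [this, Finset.sum_add_distrib, Finset.sum_sub_distrib, ← Finset.mul_sum, hps, hr]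
    have : M * M⁻¹ = 1 := mul_inv_cancel₀ hM0.ne'
    nlinarith
  have tv : ∀ S : Set α, |prob r S - prob p S| ≤ √ε := by
    intro S
    apply Real.abs_le_sqrt
    have e : prob r S - prob p S = ∑ a, if a ∈ S then r a - p a else 0 := by
      unfold prob
      rw [← Finset.sum_sub_distrib]
      refine Finset.sum_congr rfl fun a _ => ?_
      split_ifs <;> simp
    rw [e]
    refine (sq_sum_le_card_mul_sum_sq).trans (le_trans ?_ hD)
    rw [Finset.card_univ]
    refine mul_le_mul_of_nonneg_left (Finset.sum_le_sum fun a _ => ?_) hM0.le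
    split_ifs
    · exact le_rfl
    · simp only [ne_eq, OfNat.ofNat_ne_zero, not_false_eq_true, zero_pow]; positivity
  have compl : ∀ (q : α → ℝ) (ψ : α → Bool), ∑ a, q a = 1 →
      prob q {a | ψ a = false} = 1 - prob q {a | ψ a = true} := by
    intro q ψ hq
    rw [← hq]; unfold prob
    rw [← Finset.sum_sub_distrib]
    refine Finset.sum_congr rfl fun a _ => ?_
    cases hψ : ψ a <;> simp [hψ]
  have hs : 0 ≤ √ε := Real.sqrt_nonneg _
  have hMi : 0 < M⁻¹ := inv_pos.2 hM0
  have low : ∀ ψ : α → Bool, 1/2 - √ε ≤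
      max (prob p {a | ψ a = true}) (prob r {a | ψ a = false}) := by
    intro ψ
    have h1 := (abs_le.1 (tv {a | ψ a = true})).2
    have h2 := compl r ψ hr
    by_contra! hc
    have h3 := lt_of_le_of_lt (le_max_left _ _) hc
    have h4 := lt_of_le_of_lt (le_max_right _ _) hc
    linarith
  obtain ⟨s, -, hcs⟩ := Finset.exists_subset_card_eq
    (s := (Finset.univ : Finset α)) (n := Fintype.card α / 2)
    (by rw [Finset.card_univ]; exact Nat.div_le_self _ _)
  have up : (⨅ ψ : α → Bool, max (prob p {a | ψ a = true}) (prob r {a | ψ a = false}))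
      ≤ 1/2 + √ε + M⁻¹ := by
    refine (ciInf_le ⟨_, Set.forall_mem_range.2 low⟩ (fun a => decide (a ∈ s))).trans ?_
    have h2 := compl r (fun a => decide (a ∈ s)) hr
    have h1 := (abs_le.1 (tv {a | (fun a => decide (a ∈ s)) a = true})).1
    have h3 : prob p {a | (fun a => decide (a ∈ s)) a = true}
        = ((Fintype.card α / 2 : ℕ) : ℝ) * M⁻¹ := by
      unfold prob
      simp [hp, hcs]
    rw [h2]
    rw [h3] at h1 ⊢
    have h4 : ((Fintype.card α / 2 : ℕ) : ℝ) * M⁻¹ ≤ 1/2 := by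
      rw [← div_eq_mul_inv, div_le_iff₀ hM0]
      have : ((Fintype.card α / 2 : ℕ) : ℝ) * 2 ≤ M := by
        rw [hM]; exact_mod_cast Nat.div_mul_le_self _ _
      linarith
    have h5 : 1/2 - M⁻¹ ≤ ((Fintype.card α / 2 : ℕ) : ℝ) * M⁻¹ := by
      rw [← div_eq_mul_inv, le_div_iff₀ hM0, sub_mul, inv_mul_cancel₀ hM0.ne']
      have : M ≤ ((Fintype.card α / 2 : ℕ) : ℝ) * 2 + 1 := by
        rw [hM]; exact_mod_cast (by omega)
      linarith
    apply max_le <;> linarith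
  have lo := le_ciInf low
  rw [abs_le]; constructor <;> linarith

lemma two_le_card {n k : ℕ} (hk : 1 ≤ k) (hkn : k ≤ n) : (2:ℝ) ≤ Fintype.card (Flat n k) := by
  have h := c1_eq (k := k) hkn 0
  have hN := card_flat_pos n k
  have hc : ∑ W : Flat n k, ind W 0 = ((Finset.univ.filter fun W : Flat n k => (0 : F2n n) ∈ W.1).card : ℝ) := by
    simp only [ind]; rw [Finset.sum_boole]
  have h2 : (2:ℝ) ≤ 2 ^ k := by
    calc (2:ℝ) = 2 ^ 1 := by norm_num
      _ ≤ 2 ^ k := pow_le_pow_right₀ (by norm_num) hk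
  have h0 : (0:ℝ) < ((Finset.univ.filter fun W : Flat n k => (0 : F2n n) ∈ W.1).card : ℝ) := by
    rw [← hc, h]; positivity
  have h1 : (1:ℝ) ≤ ((Finset.univ.filter fun W : Flat n k => (0 : F2n n) ∈ W.1).card : ℝ) := by
    have : 0 < (Finset.univ.filter fun W : Flat n k => (0 : F2n n) ∈ W.1).card := by
      exact_mod_cast h0
    exact_mod_cast this
  rw [← hc, h, ← div_eq_mul_inv, le_div_iff₀ (by positivity)] at h1
  linarith

lemma eps_tendsto {k : ℕ} (hk : 1 ≤ k) {Δ : ℝ} (hΔ : 0 < Δ) (hΔk : Δ < DeltaK k) :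
    Tendsto (fun n : ℕ => ((2:ℝ) ^ n)⁻¹ * ((1 - ((2:ℝ) ^ k)⁻¹)⁻¹) ^ ⌈Δ * (n:ℝ)⌉₊)
      atTop (nhds 0) := by
  have hp := p_pos hk
  have hp1 : 1 - ((2:ℝ) ^ k)⁻¹ < 1 := by
    have : (0:ℝ) < ((2:ℝ) ^ k)⁻¹ := by positivity
    linarith
  unfold DeltaK at hΔk
  set q := 1 - ((2:ℝ) ^ k)⁻¹
  have hl : Real.log q < 0 := Real.log_neg hp hp1
  rw [lt_div_iff_of_neg hl] at hΔk
  have hb : (1:ℝ) ≤ q⁻¹ := (one_le_inv₀ hp).2 hp1.le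
  set c := (2:ℝ)⁻¹ * q⁻¹ ^ Δ with hc
  have hq0 : 0 < q⁻¹ := inv_pos.2 hp
  have hc0 : 0 < c := by positivity
  have hc1 : c < 1 := by
    rw [← Real.log_neg_iff hc0, hc, Real.log_mul (by norm_num) (by positivity),
      Real.log_rpow hq0, Real.log_inv, Real.log_inv]
    rw [one_div, Real.log_inv] at hΔk
    linarith
  have key := (tendsto_pow_atTop_nhds_zero_of_lt_one hc0.le hc1).mul_const q⁻¹
  rw [zero_mul] at key
  refine squeeze_zero (fun n => by positivity) (fun n => ?_) key
  have h1 : q⁻¹ ^ ⌈Δ * (n:ℝ)⌉₊ ≤ (q⁻¹ ^ Δ) ^ n * q⁻¹ := by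
    rw [← Real.rpow_natCast, ← Real.rpow_natCast, ← Real.rpow_mul hq0.le]
    calc _ ≤ q⁻¹ ^ (Δ * n + 1) := Real.rpow_le_rpow_of_exponent_le hb
          (Nat.ceil_lt_add_one (by positivity)).le
      _ = _ := by rw [Real.rpow_add hq0, Real.rpow_one]
  calc _ ≤ ((2:ℝ) ^ n)⁻¹ * ((q⁻¹ ^ Δ) ^ n * q⁻¹) := by gcongr
    _ = _ := by rw [hc, mul_pow, inv_pow]; ring

theorem stmt10 (k : ℕ) (hk : 1 ≤ k) (Δ : ℝ) (hΔ : 0 < Δ) (hΔk : Δ < DeltaK k) :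
    Tendsto (fun n : ℕ =>
        ⨅ ψ : (Fin ⌈Δ * (n:ℝ)⌉₊ → Flat n k) → Bool,
          max (prob (Punif n k ⌈Δ * (n:ℝ)⌉₊) {V | ψ V = true})
              (prob (Pplanted n k ⌈Δ * (n:ℝ)⌉₊) {V | ψ V = false}))
      atTop (nhds (1/2)) := by
  rw [tendsto_iff_dist_tendsto_zero]
  have hε := eps_tendsto hk hΔ hΔk
  have hm : Tendsto (fun n : ℕ => ⌈Δ * (n:ℝ)⌉₊) atTop atTop :=
    tendsto_nat_ceil_atTop.comp (tendsto_natCast_atTop_atTop.const_mul_atTop hΔ)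
  have hh : Tendsto (fun n : ℕ => ((1:ℝ) / 2) ^ ⌈Δ * (n:ℝ)⌉₊) atTop (nhds 0) :=
    (tendsto_pow_atTop_nhds_zero_of_lt_one (by norm_num) (by norm_num)).comp hm
  have hsum := hε.sqrt.add hh
  rw [Real.sqrt_zero, add_zero] at hsum
  refine squeeze_zero' (Eventually.of_forall fun n => dist_nonneg) ?_ hsum
  filter_upwards [eventually_ge_atTop k] with n hkn
  have := flat_nonempty n k
  rw [Real.dist_eq]
  refine (risk_abs _ _
    (((2:ℝ) ^ n)⁻¹ * ((1 - ((2:ℝ) ^ k)⁻¹)⁻¹) ^ ⌈Δ * (n:ℝ)⌉₊) punif_eq (sum_planted hk hkn) ?_).trans ?_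
  · have := chi_bound (m := ⌈Δ * (n:ℝ)⌉₊) hk hkn
    simpa using this
  · gcongr
    rw [Fintype.card_fun, Fintype.card_fin, one_div, inv_pow, Nat.cast_pow]
    gcongr
    exact two_le_card hk hkn
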